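/- For every natural number n ≥ 3, every 5-multigraph on n vertices not containing three crossing pairs has total number of edges at most (7n² − n)/4. -/

import Mathlib

/-- A `p`-multigraph `G` (a `p`-tuple of simple graphs on a common vertex set) contains
three crossing pairs if there are three distinct indices `i, j, k` and four distinct
vertices `w, x, y, z` with `wx, yz ∈ G i`, `wy, xz ∈ G j`, and `wz, xy ∈ G k`. -/
def HasThreeCrossingPairs {p : ℕ} {V : Type*} (G : Fin p → SimpleGraph V) : Prop :=
  ∃ i j k : Fin p, i ≠ j ∧ i ≠ k ∧ j ≠ k ∧
    ∃ w x y z : V, w ≠ x ∧ w ≠ y ∧ w ≠ z ∧ x ≠ y ∧ x ≠ z ∧ y ≠ z ∧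
      (G i).Adj w x ∧ (G i).Adj y z ∧
      (G j).Adj w y ∧ (G j).Adj x z ∧
      (G k).Adj w z ∧ (G k).Adj x y

/-!
Let `w u v` be the number of graphs containing `uv`, and take an inclusion-minimal vertex set `S`
violating the bound. Deleting a set `T` from `S` must destroy more than `7 / 2 * |T| * |S \ T|`
edges between `T` and its complement whenever `T` itself obeys the bound, so some vertex outside `T`
sends weight more than `7 / 2 * |T|` to `T`: at least `4`, `8`, `11`, `15` for `|T| = 1`, `2`, `3`,
`4`.

On the other hand, Hall's theorem on any four vertices shows that no vertex sends weight `11` to a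
triangle of weights `4, 4, 4` when no edge has weight `5`. Starting from an edge of weight at least
`4` and extending it by a vertex sending weight at least `8` to it produces such a triangle, once
weight `5` is ruled out. An edge of weight `5` extends in the same way to a triangle with weights
`5, 4, 4` or `5, 5, ≥ 3`. The first is excluded like `4, 4, 4`, given that the second is impossible.
The second is excluded by combining the deletion of the triangle with that of its apex: the two
yield a four-cycle of edges of weight `5` with diagonals of weights at least `3` and `2`, to which
no vertex can send weight `15`.
-/

open Finset

lemma exists_injective_mem_of_forall_exists_card_le {ι α : Type*} (t : ι → Finset α)
    (h : ∀ s : Finset ι, s.Nonempty → ∃ i ∈ s, #s ≤ #(t i)) :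
    ∃ f : ι → α, Function.Injective f ∧ ∀ i, f i ∈ t i := by
  classical
  refine (all_card_le_biUnion_card_iff_exists_injective t).mp fun s => ?_
  obtain rfl | hs := s.eq_empty_or_nonempty
  · exact Nat.zero_le _
  · obtain ⟨i, his, hi⟩ := h s hs
    exact hi.trans (card_le_card (subset_biUnion_of_mem t his))

lemma exists_distinct_mem_of_card {α : Type*} {P Q R : Finset α}
    (hP : 1 ≤ #P) (hQ : 1 ≤ #Q) (hR : 1 ≤ #R)
    (hPQ : 2 ≤ #P ∨ 2 ≤ #Q) (hPR : 2 ≤ #P ∨ 2 ≤ #R) (hQR : 2 ≤ #Q ∨ 2 ≤ #R)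
    (hPQR : 3 ≤ #P ∨ 3 ≤ #Q ∨ 3 ≤ #R) :
    ∃ i ∈ P, ∃ j ∈ Q, ∃ k ∈ R, i ≠ j ∧ i ≠ k ∧ j ≠ k := by
  obtain ⟨f, hf, hmem⟩ :=
    exists_injective_mem_of_forall_exists_card_le ![P, Q, R] fun s hs => by
      fin_cases s <;> simp_all
  exact ⟨f 0, hmem 0, f 1, hmem 1, f 2, hmem 2, hf.ne (by decide), hf.ne (by decide),
    hf.ne (by decide)⟩

lemma card_add_card_le_card_univ_add_card_inter {α : Type*} [Fintype α] [DecidableEq α]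
    (s t : Finset α) : #s + #t ≤ Fintype.card α + #(s ∩ t) := by
  have := card_inter_add_card_union s t
  have := card_le_univ (s ∪ t)
  omega

lemma sum_sum_of_symm_of_subset {V M : Type*} [DecidableEq V] [AddCommMonoid M] {w : V → V → M}
    (hsymm : ∀ u v, w u v = w v u) {S T : Finset V} (hT : T ⊆ S) :
    ∑ u ∈ S, ∑ v ∈ S, w u v =
      ∑ u ∈ S \ T, ∑ v ∈ S \ T, w u v + ∑ u ∈ T, ∑ v ∈ T, w u v +
        2 • ∑ u ∈ S \ T, ∑ v ∈ T, w u v := by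
  have hcross : ∑ u ∈ T, ∑ v ∈ S \ T, w u v = ∑ u ∈ S \ T, ∑ v ∈ T, w u v := by
    rw [sum_comm]
    exact sum_congr rfl fun u _ => sum_congr rfl fun v _ => hsymm v u
  simp only [← sum_sdiff hT, sum_add_distrib, hcross]
  abel

lemma sum_sum_insert_of_symm {V M : Type*} [DecidableEq V] [AddCommMonoid M] {w : V → V → M}
    (hsymm : ∀ u v, w u v = w v u) {x : V} {T : Finset V} (hx : x ∉ T) :
    ∑ u ∈ insert x T, ∑ v ∈ insert x T, w u v =
      w x x + 2 • ∑ v ∈ T, w x v + ∑ u ∈ T, ∑ v ∈ T, w u v := by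
  simp only [sum_insert hx, sum_add_distrib, hsymm _ x]
  abel

/-- The abstract edge multiplicities of a `p`-multigraph without three crossing pairs: `w u v`
stands for the number of graphs containing the edge `uv`. The sums in `four_point` run over the
three perfect matchings of `{v, x, y, z}`. A matching with sum `p + k` has at least `k` colors
common to its two edges, so `four_point` denies Hall's condition for choosing three distinct colors,
each common to the edges of one matching. -/
structure IsCrossingFreeWeight {V : Type*} (p : ℕ) (w : V → V → ℕ) : Prop where
  symm : ∀ u v, w u v = w v u
  self : ∀ v, w v v = 0
  le : ∀ u v, w u v ≤ p
  four_point : ∀ v x y z,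
    ¬ (p + 1 ≤ w v x + w y z ∧ p + 1 ≤ w v y + w x z ∧ p + 1 ≤ w v z + w x y ∧
      (p + 2 ≤ w v x + w y z ∨ p + 2 ≤ w v y + w x z) ∧
      (p + 2 ≤ w v x + w y z ∨ p + 2 ≤ w v z + w x y) ∧
      (p + 2 ≤ w v y + w x z ∨ p + 2 ≤ w v z + w x y) ∧
      (p + 3 ≤ w v x + w y z ∨ p + 3 ≤ w v y + w x z ∨ p + 3 ≤ w v z + w x y))

section Multigraph

variable {ι V : Type*} [Fintype ι]

open Classical in
/-- The set of colors of the pair `uv`: the indices of the graphs in which it is an edge. -/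
noncomputable def edgeColors (G : ι → SimpleGraph V) (u v : V) : Finset ι :=
  {i | (G i).Adj u v}

@[simp]
lemma mem_edgeColors {G : ι → SimpleGraph V} {u v : V} {i : ι} :
    i ∈ edgeColors G u v ↔ (G i).Adj u v := by
  simp [edgeColors]

lemma edgeColors_comm (G : ι → SimpleGraph V) (u v : V) :
    edgeColors G u v = edgeColors G v u := by
  ext i
  simp [SimpleGraph.adj_comm]

lemma edgeColors_self (G : ι → SimpleGraph V) (v : V) : edgeColors G v v = ∅ := by
  ext i
  simp

lemma sum_sum_card_edgeColors [Fintype V] (G : ι → SimpleGraph V) :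
    ∑ u, ∑ v, #(edgeColors G u v) = 2 * ∑ i, (G i).edgeSet.ncard := by
  classical
  have hdegree (i : ι) : ∑ u, ∑ v, (if (G i).Adj u v then 1 else 0) = 2 * (G i).edgeSet.ncard := by
    rw [← SimpleGraph.coe_edgeFinset, Set.ncard_coe_finset,
      ← SimpleGraph.sum_degrees_eq_twice_card_edges]
    simp only [← card_filter, ← SimpleGraph.neighborFinset_eq_filter,
      SimpleGraph.card_neighborFinset_eq_degree]
  calc ∑ u, ∑ v, #(edgeColors G u v)
      = ∑ u, ∑ v, ∑ i, if (G i).Adj u v then 1 else 0 := by simp only [edgeColors, card_filter]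
    _ = ∑ i, ∑ u, ∑ v, if (G i).Adj u v then 1 else 0 := by rw [sum_comm_cycle]
    _ = 2 * ∑ i, (G i).edgeSet.ncard := by rw [mul_sum, sum_congr rfl fun i _ => hdegree i]

lemma isCrossingFreeWeight_card_edgeColors {p : ℕ} {G : Fin p → SimpleGraph V}
    (hG : ¬ HasThreeCrossingPairs G) :
    IsCrossingFreeWeight p fun u v => #(edgeColors G u v) where
  symm u v := by rw [edgeColors_comm]
  self v := by rw [edgeColors_self, card_empty]
  le u v := by simpa using card_le_univ (edgeColors G u v)
  four_point v x y z := by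
    rintro ⟨h₁, h₂, h₃, h₁₂, h₁₃, h₂₃, h₁₂₃⟩
    have hshared (a b c d : V) : #(edgeColors G a b) + #(edgeColors G c d) ≤
        p + #(edgeColors G a b ∩ edgeColors G c d) := by
      simpa using card_add_card_le_card_univ_add_card_inter (edgeColors G a b) (edgeColors G c d)
    have hvx := hshared v x y z
    have hvy := hshared v y x z
    have hvz := hshared v z x y
    obtain ⟨i, hi, j, hj, k, hk, hij, hik, hjk⟩ := exists_distinct_mem_of_card
      (P := edgeColors G v x ∩ edgeColors G y z) (Q := edgeColors G v y ∩ edgeColors G x z)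
      (R := edgeColors G v z ∩ edgeColors G x y)
      (by omega) (by omega) (by omega) (by omega) (by omega) (by omega) (by omega)
    simp only [mem_inter, mem_edgeColors] at hi hj hk
    exact hG ⟨i, j, k, hij, hik, hjk, v, x, y, z, hi.1.ne, hj.1.ne, hk.1.ne, hk.2.ne, hj.2.ne,
      hi.2.ne, hi.1, hi.2, hj.1, hj.2, hk.1, hk.2⟩

end Multigraph

/-- The bound `(7m² - m) / 4` on the total weight inside a set of `m` vertices. The sum runs over
ordered pairs, so it counts every edge twice. -/
def MeetsEdgeBound {V : Type*} (w : V → V → ℕ) (S : Finset V) : Prop :=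
  2 * ∑ u ∈ S, ∑ v ∈ S, w u v + #S ≤ 7 * #S ^ 2

/-- An inclusion-minimal counterexample to the edge bound. -/
abbrev IsMinimalViolator {V : Type*} (w : V → V → ℕ) (S : Finset V) : Prop :=
  Minimal (fun T => ¬ MeetsEdgeBound w T) S

section Extremal

variable {V : Type*} {w : V → V → ℕ} {S : Finset V} {x y z t : V}

namespace IsCrossingFreeWeight

lemma ne_of_pos {p : ℕ} (hw : IsCrossingFreeWeight p w) (h : 0 < w x y) : x ≠ y := by
  rintro rfl
  exact h.ne' (hw.self x)

lemma sum_sum_insert [DecidableEq V] {p : ℕ} (hw : IsCrossingFreeWeight p w) {T : Finset V}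
    (hx : x ∉ T) :
    ∑ u ∈ insert x T, ∑ v ∈ insert x T, w u v =
      2 * ∑ v ∈ T, w x v + ∑ u ∈ T, ∑ v ∈ T, w u v := by
  rw [sum_sum_insert_of_symm hw.symm hx, hw.self, zero_add, smul_eq_mul]

lemma sum_sum_triple [DecidableEq V] {p : ℕ} (hw : IsCrossingFreeWeight p w)
    (hxy : x ≠ y) (hxz : x ≠ z) (hyz : y ≠ z) :
    ∑ u ∈ {x, y, z}, ∑ v ∈ {x, y, z}, w u v = 2 * (w x y + w x z + w y z) := by
  rw [hw.sum_sum_insert (by simp [hxy, hxz]), sum_pair hyz, hw.sum_sum_insert (by simpa),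
    sum_singleton, sum_singleton, sum_singleton, hw.self]
  ring

variable (hw : IsCrossingFreeWeight 5 w)
include hw

lemma meetsEdgeBound_of_card_le_three (hS : #S ≤ 3) : MeetsEdgeBound w S := by
  classical
  have hdegree : ∀ u ∈ S, ∑ v ∈ S, w u v ≤ 5 * (#S - 1) := fun u hu => by
    rw [← sum_erase S (hw.self u), ← card_erase_of_mem hu, mul_comm]
    exact sum_le_card_nsmul _ _ _ fun v _ => hw.le u v
  have hsum := sum_le_card_nsmul S _ _ hdegree
  rw [MeetsEdgeBound]
  interval_cases #S <;> simp only [smul_eq_mul] at hsum <;> omega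

lemma meetsEdgeBound_quadruple [DecidableEq V] (hxy : x ≠ y) (hxz : x ≠ z) (hxt : x ≠ t)
    (hyz : y ≠ z) (hyt : y ≠ t) (hzt : z ≠ t) : MeetsEdgeBound w {x, y, z, t} := by
  have hx : x ∉ ({y, z, t} : Finset V) := by simp [hxy, hxz, hxt]
  have hweight : w x y + w x z + w x t + (w y z + w y t + w z t) ≤ 25 := by
    have := hw.four_point x y z t
    have := hw.le x y
    have := hw.le x z
    have := hw.le x t
    have := hw.le y z
    have := hw.le y t
    have := hw.le z t
    omega
  rw [MeetsEdgeBound, hw.sum_sum_insert hx, hw.sum_sum_triple hyz hyt hzt,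
    sum_insert (by simp [hyz, hyt]), sum_pair hzt, card_insert_of_notMem hx,
    card_eq_three.mpr ⟨y, z, t, hyz, hyt, hzt, rfl⟩]
  omega

lemma add_le_fourteen_of_four_cycle (v : V) (hxz : w x z = 5) (hyz : w y z = 5)
    (hxt : w x t = 5) (hyt : w y t = 5) (hxy : 3 ≤ w x y) (hzt : 2 ≤ w z t) :
    w v x + w v y + w v z + w v t ≤ 14 := by
  have := hw.le v x
  have := hw.le v y
  have := hw.le v z
  have := hw.le v t
  have hxyz := hw.four_point v x y z
  have hxyt := hw.four_point v x y t
  have hxzt := hw.four_point v x z t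
  have hyzt := hw.four_point v y z t
  by_contra! hlt
  have hlarge : 3 ≤ w v z ∨ 3 ≤ w v t := by omega
  have hsmall : w v x + w v y ≤ 5 := by omega
  have hz5 : w v z = 5 := by omega
  have ht5 : w v t = 5 := by omega
  omega

lemma eq_of_apex_weighted_large (v : V) (hxy : w x y = 5) (hxz : w x z = 5) (hyz : 3 ≤ w y z)
    (hv : 36 ≤ 3 * (w v x + w v y + w v z) + w v x) :
    w v x = 2 ∧ w v y = 5 ∧ w v z = 5 := by
  have := hw.le v x
  have := hw.le v y
  have := hw.le v z
  have := hw.four_point v x y z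
  omega

end IsCrossingFreeWeight

lemma exists_isMinimalViolator (h : ¬ MeetsEdgeBound w S) : ∃ T, IsMinimalViolator w T :=
  exists_minimal_of_wellFoundedLT _ ⟨S, h⟩

namespace IsMinimalViolator

variable (hS : IsMinimalViolator w S)
include hS

lemma meetsEdgeBound_of_ssubset {T : Finset V} (hT : T ⊂ S) : MeetsEdgeBound w T :=
  not_not.mp (hS.not_prop_of_lt hT)

lemma lt_sum_sum [DecidableEq V] (hsymm : ∀ u v, w u v = w v u) {T : Finset V} (hT : T ⊆ S)
    (hne : T.Nonempty) :
    14 * (#(S \ T) * #T) + 7 * #T ^ 2 <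
      2 * ∑ u ∈ T, ∑ v ∈ T, w u v + 4 * ∑ v ∈ S \ T, ∑ t ∈ T, w v t + #T := by
  have hrest := hS.meetsEdgeBound_of_ssubset (sdiff_ssubset hT hne)
  have hviolates := hS.prop
  rw [MeetsEdgeBound] at hrest hviolates
  rw [sum_sum_of_symm_of_subset hsymm hT, ← card_sdiff_add_card_eq_card hT,
    smul_eq_mul] at hviolates
  linarith

lemma exists_lt_sum [DecidableEq V] (hsymm : ∀ u v, w u v = w v u) {T : Finset V} (hT : T ⊆ S)
    (hne : T.Nonempty) (hbound : MeetsEdgeBound w T) :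
    ∃ v ∈ S \ T, 7 * #T < 2 * ∑ t ∈ T, w v t := by
  by_contra! hle
  have hsum := sum_le_card_nsmul (S \ T) _ _ hle
  have hlt := hS.lt_sum_sum hsymm hT hne
  rw [← mul_sum, smul_eq_mul] at hsum
  rw [MeetsEdgeBound] at hbound
  linarith

variable (hw : IsCrossingFreeWeight 5 w)
include hw

lemma exists_four_le (hx : x ∈ S) : ∃ v ∈ S, 4 ≤ w v x := by
  classical
  obtain ⟨v, hv, hlt⟩ := hS.exists_lt_sum hw.symm (singleton_subset_iff.mpr hx)
    (singleton_nonempty x) (hw.meetsEdgeBound_of_card_le_three (by simp))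
  rw [sum_singleton, card_singleton] at hlt
  exact ⟨v, (mem_sdiff.mp hv).1, by omega⟩

lemma exists_eight_le_add (hx : x ∈ S) (hy : y ∈ S) (hxy : x ≠ y) :
    ∃ v ∈ S, 8 ≤ w v x + w v y := by
  classical
  obtain ⟨v, hv, hlt⟩ := hS.exists_lt_sum hw.symm (T := {x, y}) (by grind) (by simp)
    (hw.meetsEdgeBound_of_card_le_three (by simp [hxy]))
  rw [sum_pair hxy, card_pair hxy] at hlt
  exact ⟨v, (mem_sdiff.mp hv).1, by omega⟩

lemma exists_eleven_le_add_add (hx : x ∈ S) (hy : y ∈ S) (hz : z ∈ S) (hxy : x ≠ y) (hxz : x ≠ z)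
    (hyz : y ≠ z) : ∃ v ∈ S, 11 ≤ w v x + w v y + w v z := by
  classical
  have hcard : #{x, y, z} = 3 := card_eq_three.mpr ⟨x, y, z, hxy, hxz, hyz, rfl⟩
  obtain ⟨v, hv, hlt⟩ := hS.exists_lt_sum hw.symm (T := {x, y, z}) (by grind) (by simp)
    (hw.meetsEdgeBound_of_card_le_three hcard.le)
  rw [sum_insert (by simp [hxy, hxz]), sum_pair hyz, hcard] at hlt
  exact ⟨v, (mem_sdiff.mp hv).1, by omega⟩

lemma exists_fifteen_le_add_add_add (hx : x ∈ S) (hy : y ∈ S) (hz : z ∈ S) (ht : t ∈ S)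
    (hxy : x ≠ y) (hxz : x ≠ z) (hxt : x ≠ t) (hyz : y ≠ z) (hyt : y ≠ t) (hzt : z ≠ t) :
    ∃ v ∈ S, 15 ≤ w v x + w v y + w v z + w v t := by
  classical
  obtain ⟨v, hv, hlt⟩ := hS.exists_lt_sum hw.symm (T := {x, y, z, t}) (by grind) (by simp)
    (hw.meetsEdgeBound_quadruple hxy hxz hxt hyz hyt hzt)
  rw [sum_insert (by simp [hxy, hxz, hxt]), sum_insert (by simp [hyz, hyt]), sum_pair hzt,
    card_insert_of_notMem (by simp [hxy, hxz, hxt]),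
    card_eq_three.mpr ⟨y, z, t, hyz, hyt, hzt, rfl⟩] at hlt
  exact ⟨v, (mem_sdiff.mp hv).1, by omega⟩

lemma exists_apex_weighted (hx : x ∈ S) (hy : y ∈ S) (hz : z ∈ S) (hyz : y ≠ z)
    (hxy5 : w x y = 5) (hxz5 : w x z = 5) :
    ∃ v ∈ S, 36 ≤ 3 * (w v x + w v y + w v z) + w v x := by
  classical
  have hxy : x ≠ y := hw.ne_of_pos (by omega)
  have hxz : x ≠ z := hw.ne_of_pos (by omega)
  have hcard : #{x, y, z} = 3 := card_eq_three.mpr ⟨x, y, z, hxy, hxz, hyz, rfl⟩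
  have hsub : {y, z} ⊆ S \ {x} := by grind
  have hrest : (S \ {x}) \ {y, z} = S \ {x, y, z} := by rw [sdiff_sdiff_left]; rfl
  have htriple := hS.lt_sum_sum hw.symm (T := {x, y, z}) (by grind) (by simp)
  have hapex := hS.lt_sum_sum hw.symm (singleton_subset_iff.mpr hx) (singleton_nonempty x)
  rw [hw.sum_sum_triple hxy hxz hyz, hcard] at htriple
  simp only [← sum_sdiff hsub, ← card_sdiff_add_card_eq_card hsub, hrest, sum_singleton,
    card_singleton, hw.self, sum_pair hyz, card_pair hyz, hw.symm _ x, hxy5, hxz5] at hapex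
  have := hw.le y z
  -- For `|S|` large, `htriple` and `hapex` force the average over `S \ {x, y, z}` of the sum to
  -- `{x, y, z}` above about `21 / 2`, and that of `w v x` above about `7 / 2`. The bound
  -- `35 = 3 * (21 / 2) + 7 / 2` is exactly critical, so the additive constants decide.
  by_contra! hle
  have hsum := sum_le_card_nsmul (S \ {x, y, z})
    (fun v => 3 * ∑ t ∈ {x, y, z}, w v t + w x v) 35 fun v hv => by
      have := hle v (mem_sdiff.mp hv).1
      rw [sum_insert (by simp [hxy, hxz]), sum_pair hyz, hw.symm x v]
      omega
  rw [sum_add_distrib, ← mul_sum, smul_eq_mul] at hsum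
  omega

lemma le_two_of_eq_five (hx : x ∈ S) (hy : y ∈ S) (hz : z ∈ S) (hxy : w x y = 5)
    (hxz : w x z = 5) : w y z ≤ 2 := by
  by_contra! hyz
  have hne_xy : x ≠ y := hw.ne_of_pos (by omega)
  have hne_xz : x ≠ z := hw.ne_of_pos (by omega)
  have hne_yz : y ≠ z := hw.ne_of_pos (by omega)
  obtain ⟨v, hv, hvlarge⟩ := hS.exists_apex_weighted hw hx hy hz hne_yz hxy hxz
  obtain ⟨hvx, hvy, hvz⟩ := hw.eq_of_apex_weighted_large v hxy hxz hyz hvlarge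
  obtain ⟨u, -, hu⟩ := hS.exists_fifteen_le_add_add_add hw hy hz hx hv hne_yz hne_xy.symm
    (hw.ne_of_pos (by omega)).symm hne_xz.symm (hw.ne_of_pos (by omega)).symm
    (hw.ne_of_pos (by omega)).symm
  have := hw.add_le_fourteen_of_four_cycle u (hw.symm y x ▸ hxy) (hw.symm z x ▸ hxz)
    (hw.symm y v ▸ hvy) (hw.symm z v ▸ hvz) hyz (hw.symm x v ▸ hvx.ge)
  omega

lemma not_five_four_four (hx : x ∈ S) (hy : y ∈ S) (hz : z ∈ S) (hxy : w x y = 5)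
    (hxz : w x z = 4) (hyz : w y z = 4) : False := by
  obtain ⟨v, hv, hvlarge⟩ := hS.exists_eleven_le_add_add hw hx hy hz (hw.ne_of_pos (by omega))
    (hw.ne_of_pos (by omega)) (hw.ne_of_pos (by omega))
  have hvx_vz : w v x = 5 → w v z = 5 → w x z ≤ 2 := hS.le_two_of_eq_five hw hv hx hz
  have hvy_vz : w v y = 5 → w v z = 5 → w y z ≤ 2 := hS.le_two_of_eq_five hw hv hy hz
  have := hw.le v x
  have := hw.le v y
  have := hw.le v z
  have := hw.four_point v x y z
  omega

lemma le_four (hx : x ∈ S) (hy : y ∈ S) : w x y ≤ 4 := by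
  by_contra! h
  have hxy : w x y = 5 := le_antisymm (hw.le x y) h
  obtain ⟨z, hz, hlarge⟩ := hS.exists_eight_le_add hw hx hy (hw.ne_of_pos (by omega))
  rw [hw.symm z x, hw.symm z y] at hlarge
  have hxz_le := hw.le x z
  have hyz_le := hw.le y z
  obtain hxz | hyz | ⟨hxz, hyz⟩ : w x z = 5 ∨ w y z = 5 ∨ w x z = 4 ∧ w y z = 4 := by omega
  · have := hS.le_two_of_eq_five hw hx hy hz hxy hxz
    omega
  · have := hS.le_two_of_eq_five hw hy hx hz (hw.symm y x ▸ hxy) hyz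
    omega
  · exact hS.not_five_four_four hw hx hy hz hxy hxz hyz

lemma not_four_four_four (hx : x ∈ S) (hy : y ∈ S) (hz : z ∈ S) (hxy : w x y = 4)
    (hxz : w x z = 4) (hyz : w y z = 4) : False := by
  obtain ⟨v, hv, hvlarge⟩ := hS.exists_eleven_le_add_add hw hx hy hz (hw.ne_of_pos (by omega))
    (hw.ne_of_pos (by omega)) (hw.ne_of_pos (by omega))
  have := hS.le_four hw hv hx
  have := hS.le_four hw hv hy
  have := hS.le_four hw hv hz
  have := hw.four_point v x y z
  omega

end IsMinimalViolator

lemma IsCrossingFreeWeight.meetsEdgeBound (hw : IsCrossingFreeWeight 5 w) (S : Finset V) :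
    MeetsEdgeBound w S := by
  by_contra hviolates
  obtain ⟨T, hT⟩ := exists_isMinimalViolator hviolates
  obtain rfl | ⟨x, hx⟩ := T.eq_empty_or_nonempty
  · exact hT.prop (hw.meetsEdgeBound_of_card_le_three (by simp))
  obtain ⟨y, hy, hyx⟩ := hT.exists_four_le hw hx
  have hyx4 : w y x = 4 := le_antisymm (hT.le_four hw hy hx) hyx
  obtain ⟨z, hz, hlarge⟩ := hT.exists_eight_le_add hw hy hx (hw.ne_of_pos (by omega))
  have hzy := hT.le_four hw hz hy
  have hzx := hT.le_four hw hz hx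
  exact hT.not_four_four_four hw hz hy hx (by omega) (by omega) hyx4

end Extremal

theorem f5_upper_bound_general {V : Type*} [Fintype V] (G : Fin 5 → SimpleGraph V)
    (hG : ¬ HasThreeCrossingPairs G) :
    ((∑ i, (G i).edgeSet.ncard : ℕ) : ℚ) ≤
      (7 * Fintype.card V ^ 2 - Fintype.card V) / 4 := by
  have hbound := (isCrossingFreeWeight_card_edgeColors hG).meetsEdgeBound univ
  rw [MeetsEdgeBound, sum_sum_card_edgeColors, card_univ] at hbound
  have hcast : (2 * (2 * (∑ i, (G i).edgeSet.ncard : ℕ)) + Fintype.card V : ℚ) ≤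
      7 * Fintype.card V ^ 2 := by
    exact_mod_cast hbound
  linarith

/-- For `n ≥ 3`, every `5`-multigraph on `n` vertices without three crossing pairs has
at most `(7n² − n)/4` edges in total. -/
theorem f5_upper_bound (n : ℕ) (hn : 3 ≤ n) (G : Fin 5 → SimpleGraph (Fin n))
    (hG : ¬ HasThreeCrossingPairs G) :
    ((∑ i, (G i).edgeSet.ncard : ℕ) : ℚ) ≤ (7 * n ^ 2 - n) / 4 := by
  simpa using f5_upper_bound_general G hG
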